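/- arXiv:2109.11378 — 2 statements merged into one kernel-verified Lean document; each statement's English description precedes it below -/
import Mathlib

section
/- Let n ≥ 1 and let λ, μ be partitions with ⟨s_μ, p_n ∘ s_λ⟩ nonzero. Define a_r = ⌊(n|λ| − Σ_{i>r} λ_i)/r⌋ for r ≥ 1 and b_c = ⌊(n|λ| − Σ_{j>c} λ'_j)/c⌋ for c ≥ 1, and set Ξ¹ = (a_1, a_2, …) and Ξ² = (b_1, b_2, …)'. Then [μ] ⊆ [Ξ¹] and [μ] ⊆ [Ξ²]; that is, μ_r ≤ a_r for all r and μ'_c ≤ b_c for all c, so [μ] ⊆ [Ξ¹] ∩ [Ξ²]. -/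
open MvPolynomial Finset

/-- Semistandardness of a filling of an arbitrary finite set of cells `s ⊆ ℕ × ℕ`
(cells are `(row, column)` pairs): entries weakly increase along rows and strictly
increase down columns (for adjacent cells that both lie in `s`). -/
def IsSemistandardOn (s : Finset (ℕ × ℕ)) {N : ℕ} (T : s → Fin N) : Prop :=
  (∀ (i j : ℕ) (h1 : (i, j) ∈ s) (h2 : (i, j + 1) ∈ s),
      T ⟨(i, j), h1⟩ ≤ T ⟨(i, j + 1), h2⟩) ∧
  (∀ (i j : ℕ) (h1 : (i, j) ∈ s) (h2 : (i + 1, j) ∈ s),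
      T ⟨(i, j), h1⟩ < T ⟨(i + 1, j), h2⟩)

open scoped Classical in
/-- The generating polynomial, in `N` variables, of semistandard fillings of the cell
set `s` with entries in `{0, …, N-1}`. -/
noncomputable def cellSchur (N : ℕ) (s : Finset (ℕ × ℕ)) : MvPolynomial (Fin N) ℤ :=
  ∑ T ∈ Finset.univ.filter (fun T : s → Fin N => IsSemistandardOn s T),
    ∏ c : s, X (T c)

/-- The Schur polynomial `s_μ(x_1, …, x_N)`: the generating function of semistandard
Young tableaux of shape `μ` with entries in `{0, …, N-1}`. -/
noncomputable def schurPoly (N : ℕ) (μ : YoungDiagram) : MvPolynomial (Fin N) ℤ :=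
  cellSchur N μ.cells

/-- `(c, r)` (column `c`, row `r`, 0-indexed) is an outer corner of `μ`: it is not a
cell of `μ`, and adding it to `μ` again yields a Young diagram. -/
def IsOuterCorner (μ : YoungDiagram) (c r : ℕ) : Prop :=
  (r, c) ∉ μ ∧ ∃ ν : YoungDiagram, ν.cells = insert (r, c) μ.cells

/-- `Σ_{i > r} λ_i` (1-indexed), the sum of the parts of `λ` strictly below row `r`:
since `λ.rowLen i = 0` for `i ≥ λ.colLen 0`, this is `∑_{i = r}^{λ.colLen 0 - 1} λ.rowLen i`
(0-indexed). -/
def tailSum (lam : YoungDiagram) (r : ℕ) : ℕ :=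
  ∑ i ∈ Finset.Ico r (lam.colLen 0), lam.rowLen i

/-!
Both bounds follow from the inequalities `μ_1 + ⋯ + μ_r ≤ n (λ_1 + ⋯ + λ_r)` and
`μ'_1 + ⋯ + μ'_c ≤ n (λ'_1 + ⋯ + λ'_c)`, since `r μ_r ≤ μ_1 + ⋯ + μ_r` and
`λ_1 + ⋯ + λ_r = |λ| - ∑_{i > r} λ_i`.

For the rows, take `ν` in the support of the Schur expansion, maximal in dominance order among those
with `μ ⊴ ν`. The coefficient of `x^ν` in `s_κ` vanishes unless `ν ⊴ κ`, so `x^ν` occurs in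
`s_λ(x_1^n, …, x_N^n)`. Hence `ν` is `n` times the content of a semistandard tableau of shape `λ`,
whose entries less than `r` fit into the first `r` rows.

For the columns, the coefficient of `x^ν` is replaced by the pairing with `e_{ν'}`, which up to sign
is an alternating sum of coefficients over the coarsenings of the composition `ν'`. By
standardization its value on `s_κ` counts standard tableaux of shape `κ` in which all entries
outside the partial sums of `ν'` are descents, and such a tableau forces `ν' ⊴ κ'`. On
`f(x_1^n, …, x_N^n)` it vanishes unless `n` divides all parts of `ν'`, and then it is, up to sign,
the pairing of `f` with `e_{ν'/n}`.
-/

namespace SXP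

/-- The partial sum `λ_1 + ⋯ + λ_r` of the parts of a partition, complementary to `tailSum`. The
partial sums of the conjugate partition are written `headSum lam.transpose`. -/
def headSum (lam : YoungDiagram) (r : ℕ) : ℕ :=
  ∑ i ∈ range r, lam.rowLen i

section HeadSum

variable (lam : YoungDiagram)

@[simp]
lemma headSum_zero : headSum lam 0 = 0 := rfl

lemma headSum_mono : Monotone (headSum lam) :=
  fun _ _ h => sum_le_sum_of_subset (range_mono h)

lemma headSum_injective : Function.Injective headSum := by
  intro a b h
  have hrow : ∀ i, a.rowLen i = b.rowLen i := fun i => by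
    have hi := congrFun h i
    have hsucc := congrFun h (i + 1)
    simp only [headSum, sum_range_succ] at hi hsucc
    lia
  ext ⟨i, j⟩
  simp only [YoungDiagram.mem_cells, YoungDiagram.mem_iff_lt_rowLen, hrow]

lemma card_filter_row_lt (r : ℕ) : #{c : lam.cells | c.1.1 < r} = headSum lam r := by
  have hfiber := sum_card_fiberwise_eq_card_filter lam.cells (range r) Prod.fst
  simp only [mem_range] at hfiber
  simp only [headSum, YoungDiagram.rowLen_eq_card, YoungDiagram.row, hfiber]
  rw [card_filter, card_filter]
  exact sum_coe_sort lam.cells fun c => if c.1 < r then 1 else 0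

lemma card_filter_col_lt (r : ℕ) :
    #{c : lam.cells | c.1.2 < r} = headSum lam.transpose r := by
  have hfiber := sum_card_fiberwise_eq_card_filter lam.cells (range r) Prod.snd
  simp only [mem_range] at hfiber
  simp only [headSum, YoungDiagram.rowLen_transpose, YoungDiagram.colLen_eq_card,
    YoungDiagram.col, hfiber]
  rw [card_filter, card_filter]
  exact sum_coe_sort lam.cells fun c => if c.2 < r then 1 else 0

lemma card_cells_transpose : #lam.transpose.cells = #lam.cells := by
  simp [YoungDiagram.transpose]

lemma headSum_transpose_le_card (r : ℕ) : headSum lam.transpose r ≤ #lam.cells := by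
  rw [← card_filter_col_lt]
  exact (card_filter_le _ _).trans (by simp)

lemma row_lt_colLen_zero (c : lam.cells) : c.1.1 < lam.colLen 0 :=
  YoungDiagram.mem_iff_lt_colLen.1 <|
    lam.up_left_mem le_rfl (Nat.zero_le _) ((YoungDiagram.mem_cells _).1 c.2)

lemma headSum_eq_card {r : ℕ} (hr : lam.colLen 0 ≤ r) : headSum lam r = #lam.cells := by
  rw [← card_filter_row_lt, filter_true_of_mem fun c _ => (row_lt_colLen_zero lam c).trans_le hr]
  simp

lemma headSum_add_tailSum (r : ℕ) : headSum lam r + tailSum lam r = #lam.cells := by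
  obtain h | h := le_total r (lam.colLen 0)
  · rw [← headSum_eq_card lam le_rfl]
    exact sum_range_add_sum_Ico _ h
  · rw [headSum_eq_card lam h, tailSum, Ico_eq_empty_of_le h, sum_empty, add_zero]

lemma mul_rowLen_le_headSum (r : ℕ) : r * lam.rowLen (r - 1) ≤ headSum lam r := by
  simpa [headSum] using card_nsmul_le_sum (range r) lam.rowLen (lam.rowLen (r - 1))
    fun i hi => lam.rowLen_anti _ _ (Nat.le_sub_one_of_lt (mem_range.1 hi))

lemma rowLen_le_of_headSum_le {lam} {mu : YoungDiagram} {n r : ℕ} (hn : 0 < n) (hr : 0 < r)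
    (h : headSum mu r ≤ n * headSum lam r) :
    mu.rowLen (r - 1) ≤ (n * #lam.cells - tailSum lam r) / r := by
  rw [Nat.le_div_iff_mul_le hr, mul_comm, ← headSum_add_tailSum lam r, mul_add]
  have hmul := mul_rowLen_le_headSum mu r
  have htail : tailSum lam r ≤ n * tailSum lam r := Nat.le_mul_of_pos_left _ hn
  lia

end HeadSum

/-- The dominance order `μ ⊴ ν` on partitions of the same size. -/
def DominatedBy (mu nu : YoungDiagram) : Prop :=
  #mu.cells = #nu.cells ∧ headSum mu ≤ headSum nu

instance : IsPartialOrder YoungDiagram DominatedBy where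
  refl _ := ⟨rfl, le_rfl⟩
  trans _ _ _ h h' := ⟨h.1.trans h'.1, h.2.trans h'.2⟩
  antisymm _ _ h h' := headSum_injective (le_antisymm h.2 h'.2)

instance : IsPartialOrder YoungDiagram (InvImage DominatedBy YoungDiagram.transpose) where
  refl _ := refl_of DominatedBy _
  trans _ _ _ := trans_of DominatedBy
  antisymm _ _ h h' := YoungDiagram.transpose_eq_iff.1 (antisymm_of DominatedBy h h')

/-- For `l` maximal among the indices above `m`, triangularity leaves only the term of index `l` in
the image of the sum under `φ l`. -/
lemma exists_rel_apply_sum_ne_zero {ι R M : Type*} [Ring R] [NoZeroDivisors R] [AddCommGroup M]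
    [Module R M] (r : ι → ι → Prop) [IsPartialOrder ι r] (g : ι → M) (φ : ι → M →ₗ[R] R)
    (a : ι →₀ R) (hdiag : ∀ l ∈ a.support, φ l (g l) ≠ 0)
    (htri : ∀ l ∈ a.support, ∀ m ∈ a.support, φ l (g m) ≠ 0 → r l m) {m : ι}
    (hm : m ∈ a.support) :
    ∃ l ∈ a.support, r m l ∧ φ l (∑ i ∈ a.support, a i • g i) ≠ 0 := by
  let _ : PartialOrder ι :=
    { le := r
      le_refl := refl_of r
      le_trans := fun _ _ _ => trans_of r
      le_antisymm := fun _ _ => antisymm_of r }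
  obtain ⟨l, hml, hl⟩ := a.support.exists_le_maximal hm
  refine ⟨l, hl.prop, hml, ?_⟩
  rw [map_sum, sum_eq_single_of_mem l hl.prop]
  · rw [map_smul, smul_eq_mul]
    exact mul_ne_zero (Finsupp.mem_support_iff.1 hl.prop) (hdiag l hl.prop)
  · intro i hi hil
    have hzero : φ l (g i) = 0 := by
      by_contra hne
      exact hil (hl.eq_of_ge hi (htri l hl.prop i hi hne))
    rw [map_smul, hzero, smul_zero]

/-- The content (weight) of a filling `T`: the exponent vector of the monomial `∏ x_{T(c)}`. -/
noncomputable def content {α σ : Type*} [Fintype α] (T : α → σ) : σ →₀ ℕ :=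
  ∑ a, Finsupp.single (T a) 1

section Content

variable {α β σ : Type*} [Fintype α] [Fintype β]

lemma content_apply [DecidableEq σ] (T : α → σ) (v : σ) : content T v = #{a | T a = v} := by
  rw [content, Finsupp.finsetSum_apply, card_filter]
  simp only [Finsupp.single_apply]

lemma sum_content [DecidableEq σ] (T : α → σ) (s : Finset σ) :
    ∑ v ∈ s, content T v = #{a | T a ∈ s} := by
  simp only [content_apply, sum_card_fiberwise_eq_card_filter]

lemma sum_univ_content [Fintype σ] (T : α → σ) : ∑ v, content T v = Fintype.card α := by
  classical
  simp [sum_content]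

lemma content_comp_equiv (T : β → σ) (e : α ≃ β) : content (T ∘ e) = content T :=
  e.sum_comp fun b => Finsupp.single (T b) 1

lemma content_comp_fst (T : α → σ) :
    content (fun p : α × β => T p.1) = Fintype.card β • content T := by
  simp [content, Fintype.sum_prod_type, smul_sum]

lemma exists_equiv_comp_eq {T : α → σ} {U : β → σ} (h : content T = content U) :
    ∃ e : α ≃ β, U ∘ e = T := by
  classical
  have hfiber : ∀ v, Nonempty ({a // T a = v} ≃ {b // U b = v}) := fun v => by
    rw [← Fintype.card_eq]
    simpa only [content_apply, Fintype.card_subtype] using DFunLike.congr_fun h v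
  exact ⟨Equiv.ofFiberEquiv fun v => (hfiber v).some, funext (Equiv.ofFiberEquiv_map _)⟩

lemma eq_of_monotone_of_content_eq [PartialOrder σ] {d : ℕ} {f g : Fin d → σ} (hf : Monotone f)
    (hg : Monotone g) (h : content f = content g) : f = g := by
  obtain ⟨e, rfl⟩ := exists_equiv_comp_eq h
  exact Tuple.unique_monotone (τ := 1) hf hg

end Content

section SchurCoefficients

variable {N : ℕ} {l : YoungDiagram}

open scoped Classical in
lemma coeff_schurPoly (N : ℕ) (l : YoungDiagram) (m : Fin N →₀ ℕ) :
    coeff m (schurPoly N l) =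
      #{T : l.cells → Fin N | IsSemistandardOn l.cells T ∧ content T = m} := by
  have hmonomial : ∀ T : l.cells → Fin N,
      (∏ c, X (T c) : MvPolynomial (Fin N) ℤ) = monomial (content T) 1 :=
    fun T => (monomial_sum_one _ _).symm
  simp only [schurPoly, cellSchur, coeff_sum, hmonomial, coeff_monomial, ← filter_filter,
    card_filter, Nat.cast_sum, Nat.cast_ite, Nat.cast_one, Nat.cast_zero]

lemma coeff_schurPoly_ne_zero_iff {m : Fin N →₀ ℕ} :
    coeff m (schurPoly N l) ≠ 0 ↔
      ∃ T : l.cells → Fin N, IsSemistandardOn l.cells T ∧ content T = m := by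
  classical
  rw [coeff_schurPoly, Nat.cast_ne_zero, card_ne_zero, filter_nonempty_iff]
  simp only [mem_univ, true_and]

lemma row_le_of_isSemistandardOn {T : l.cells → Fin N} (hT : IsSemistandardOn l.cells T)
    (i j : ℕ) (h : (i, j) ∈ l.cells) : i ≤ T ⟨(i, j), h⟩ := by
  induction i with
  | zero => exact Nat.zero_le _
  | succ i ih =>
    have habove : (i, j) ∈ l.cells := l.up_left_mem i.le_succ le_rfl h
    exact (ih habove).trans_lt (hT.2 i j habove h)

lemma sum_content_lt_le_headSum {T : l.cells → Fin N} (hT : IsSemistandardOn l.cells T) (r : ℕ) :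
    ∑ v ∈ {v : Fin N | v.val < r}, content T v ≤ headSum l r := by
  rw [sum_content, ← card_filter_row_lt]
  refine card_le_card (monotone_filter_right _ fun c _ hc => ?_)
  exact (row_le_of_isSemistandardOn hT c.1.1 c.1.2 c.2).trans_lt (mem_filter.1 hc).2

/-- The superstandard tableau, whose `i`-th row is filled with `i`'s. -/
def superstandard (h : l.colLen 0 ≤ N) (c : l.cells) : Fin N :=
  ⟨c.1.1, (row_lt_colLen_zero l c).trans_le h⟩

lemma isSemistandardOn_superstandard (h : l.colLen 0 ≤ N) :
    IsSemistandardOn l.cells (superstandard h) :=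
  ⟨fun _ _ _ _ => le_rfl, fun i _ _ _ => Fin.lt_def.2 i.lt_succ_self⟩

lemma sum_content_superstandard (h : l.colLen 0 ≤ N) (r : ℕ) :
    ∑ v ∈ {v : Fin N | v.val < r}, content (superstandard h) v = headSum l r := by
  simpa [sum_content, superstandard] using card_filter_row_lt l r

lemma dominatedBy_of_coeff_schurPoly_ne_zero {nu : YoungDiagram} (h : nu.colLen 0 ≤ N)
    (hcoeff : coeff (content (superstandard h)) (schurPoly N l) ≠ 0) : DominatedBy nu l := by
  obtain ⟨T, hT, hcontent⟩ := coeff_schurPoly_ne_zero_iff.1 hcoeff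
  refine ⟨?_, fun r => ?_⟩
  · have hcard := sum_univ_content T
    rw [hcontent, sum_univ_content] at hcard
    simpa using hcard
  · rw [← sum_content_superstandard h, ← hcontent]
    exact sum_content_lt_le_headSum hT r

lemma exists_coeff_ne_zero_of_mem_support {co : YoungDiagram →₀ ℤ}
    (hrows : ∀ l ∈ co.support, l.colLen 0 ≤ N) {mu : YoungDiagram} (hmu : mu ∈ co.support) :
    ∃ m : Fin N →₀ ℕ, coeff m (∑ l ∈ co.support, co l • schurPoly N l) ≠ 0 ∧
      ∑ v, m v = #mu.cells ∧ ∀ r, headSum mu r ≤ ∑ v ∈ {v : Fin N | v.val < r}, m v := by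
  classical
  let φ (l : YoungDiagram) : MvPolynomial (Fin N) ℤ →ₗ[ℤ] ℤ :=
    if h : l.colLen 0 ≤ N then lcoeff ℤ (content (superstandard h)) else 0
  have hφ {l} (hl : l ∈ co.support) : φ l = lcoeff ℤ (content (superstandard (hrows l hl))) :=
    dif_pos (hrows l hl)
  obtain ⟨nu, hnu, ⟨hcard, hle⟩, hne⟩ :=
    exists_rel_apply_sum_ne_zero DominatedBy (schurPoly N) φ co
      (fun l hl => by
        rw [hφ hl]
        exact coeff_schurPoly_ne_zero_iff.2 ⟨_, isSemistandardOn_superstandard _, rfl⟩)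
      (fun l hl m _ hne => by
        rw [hφ hl] at hne
        exact dominatedBy_of_coeff_schurPoly_ne_zero (hrows l hl) hne)
      hmu
  rw [hφ hnu] at hne
  refine ⟨_, hne, ?_, fun r => (hle r).trans (sum_content_superstandard _ r).ge⟩
  rw [sum_univ_content, Fintype.card_coe, hcard]

lemma card_eq_and_headSum_le_of_expand_eq_sum {n : ℕ} (hn : n ≠ 0) {lam : YoungDiagram}
    {co : YoungDiagram →₀ ℤ} (hrows : ∀ l ∈ co.support, l.colLen 0 ≤ N)
    (hexp : expand n (schurPoly N lam) = ∑ l ∈ co.support, co l • schurPoly N l)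
    {mu : YoungDiagram} (hmu : mu ∈ co.support) :
    #mu.cells = n * #lam.cells ∧ ∀ r, headSum mu r ≤ n * headSum lam r := by
  classical
  obtain ⟨m, hcoeff, hcard, hle⟩ := exists_coeff_ne_zero_of_mem_support hrows hmu
  rw [← hexp, ← mem_support_iff, support_expand _ hn, mem_image] at hcoeff
  obtain ⟨m, hm, rfl⟩ := hcoeff
  obtain ⟨T, hT, rfl⟩ := coeff_schurPoly_ne_zero_iff.1 (mem_support_iff.1 hm)
  simp only [Finsupp.smul_apply, smul_eq_mul, ← mul_sum] at hcard hle
  refine ⟨?_, fun r => (hle r).trans (Nat.mul_le_mul_left n (sum_content_lt_le_headSum hT r))⟩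
  rw [← hcard, sum_univ_content, Fintype.card_coe]

end SchurCoefficients

section Standardization

variable {s : Finset (ℕ × ℕ)} {d N : ℕ}

lemma existsUnique_strictMono_comp_symm {α κ : Type*} [Fintype α] [LinearOrder κ] {key : α → κ}
    (hkey : Function.Injective key) (hd : Fintype.card α = d) :
    ∃! P : α ≃ Fin d, StrictMono (key ∘ P.symm) := by
  let _ : LinearOrder α := LinearOrder.lift' key hkey
  let e : Fin d ≃o α := Fintype.orderIsoFinOfCardEq α hd
  refine ⟨e.symm.toEquiv, e.strictMono, fun Q hQ => ?_⟩
  have hcomp : key ∘ Q.symm = key ∘ e := (StrictMono.range_inj hQ e.strictMono).1 <| by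
    exact (Q.symm.surjective.range_comp key).trans (e.surjective.range_comp key).symm
  rw [← Q.symm_symm]
  exact congrArg Equiv.symm (DFunLike.coe_injective (hkey.comp_left hcomp) : Q.symm = e.toEquiv)

lemma card_filter_apply_lt {α : Type*} [Fintype α] (P : α ≃ Fin d) {j : ℕ} (hj : j ≤ d) :
    #{a | (P a : ℕ) < j} = j := by
  rw [card_equiv P (t := {i : Fin d | i.val < j}) (by simp), Fin.card_filter_val_lt,
    min_eq_right hj]

/-- The column of the cell holding the entry `j` of the bijective filling `P`; the value for
`j ≥ d` is junk. -/
def colWord (P : s ≃ Fin d) (j : ℕ) : ℕ :=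
  if h : j < d then (P.symm ⟨j, h⟩).1.2 else 0

lemma colWord_apply (P : s ≃ Fin d) (c : s) : colWord P (P c) = c.1.2 := by
  simp [colWord]

/-- The descents of a standard filling `P`, i.e. of a bijective filling that is semistandard: the
entries `j` whose cell is weakly left of the cell of `j - 1`. -/
def descents (P : s ≃ Fin d) : Finset ℕ :=
  {j ∈ Ico 1 d | colWord P j ≤ colWord P (j - 1)}

/-- The index of the block containing `i` when `ℕ` is cut into intervals beginning at `0` and at
the positive elements of `S`. -/
def blockIndex (S : Finset ℕ) (i : ℕ) : ℕ :=
  Nat.count (· + 1 ∈ S) i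

lemma blockIndex_mono (S : Finset ℕ) : Monotone (blockIndex S) :=
  Nat.count_monotone _

lemma blockIndex_succ (S : Finset ℕ) (i : ℕ) :
    blockIndex S (i + 1) = blockIndex S i + if i + 1 ∈ S then 1 else 0 :=
  Nat.count_succ _ _

/-- The weakly increasing word of length `d` that is constant exactly on the blocks cut out by the
set of breaks `S ⊆ {1, …, d - 1}`. Its content is the composition of `d` with break set `S`. -/
def blockWord (hN : d ≤ N) (S : Finset ℕ) (i : Fin d) : Fin N :=
  ⟨blockIndex S i, (Nat.count_le _).trans_lt (i.2.trans_le hN)⟩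

lemma blockWord_mono (hN : d ≤ N) (S : Finset ℕ) : Monotone (blockWord hN S) :=
  fun _ _ h => blockIndex_mono S h

/-- `P` is the standardization of the filling `T`: it numbers the cells by increasing entry of `T`,
and from left to right among equal entries. -/
def IsStandardization (T : s → Fin N) (P : s ≃ Fin d) : Prop :=
  StrictMono ((fun c : s => toLex (T c, c.1.2)) ∘ P.symm)

lemma IsStandardization.lt_iff {T : s → Fin N} {P : s ≃ Fin d} (h : IsStandardization T P)
    (a b : s) : P a < P b ↔ T a < T b ∨ T a = T b ∧ a.1.2 < b.1.2 := by
  rw [← StrictMono.lt_iff_lt h]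
  simp [Prod.Lex.toLex_lt_toLex]

lemma IsStandardization.isSemistandardOn_iff {T : s → Fin N} {P : s ≃ Fin d}
    (h : IsStandardization T P) : IsSemistandardOn s P ↔ IsSemistandardOn s T := by
  refine and_congr (forall₄_congr fun i j h1 h2 => ?_) (forall₄_congr fun i j h1 h2 => ?_)
  · rw [← not_lt, ← not_lt, h.lt_iff]
    simp
  · rw [h.lt_iff]
    simp

lemma isStandardization_blockWord_comp_iff (hN : d ≤ N) {S : Finset ℕ} {P : s ≃ Fin d} :
    IsStandardization (blockWord hN S ∘ P) P ↔ descents P ⊆ S := by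
  cases d with
  | zero => simp [IsStandardization, descents, Subsingleton.strictMono]
  | succ d =>
    have hstep (i : Fin d) :
        toLex (blockWord hN S i.castSucc, (P.symm i.castSucc).1.2) <
          toLex (blockWord hN S i.succ, (P.symm i.succ).1.2) ↔
        (colWord P (i + 1) ≤ colWord P i → i.val + 1 ∈ S) := by
      have hcol (k : Fin (d + 1)) : (P.symm k).1.2 = colWord P k := by
        rw [← colWord_apply, P.apply_symm_apply]
      rw [Prod.Lex.toLex_lt_toLex, hcol, hcol]
      by_cases hS : i.val + 1 ∈ S <;>
        simp [blockWord, blockIndex_succ, Fin.lt_def, Fin.ext_iff, hS]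
    have hdescents : descents P ⊆ S ↔
        ∀ i : Fin d, colWord P (i + 1) ≤ colWord P i → i.val + 1 ∈ S := by
      refine ⟨fun h i hle => h (by simp [descents, i.2, hle]), fun h j hj => ?_⟩
      simp only [descents, mem_filter, mem_Ico] at hj
      obtain ⟨⟨hpos, hlt⟩, hle⟩ := hj
      obtain ⟨i, rfl⟩ := Nat.exists_eq_add_of_le' hpos
      exact h ⟨i, Nat.lt_of_succ_lt_succ hlt⟩ hle
    rw [IsStandardization, Fin.strictMono_iff_lt_succ, hdescents]
    simpa using forall_congr' hstep

lemma IsStandardization.eq_blockWord_comp {T : s → Fin N} {P : s ≃ Fin d}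
    (h : IsStandardization T P) {hN : d ≤ N} {S : Finset ℕ}
    (hT : content T = content (blockWord hN S)) : T = blockWord hN S ∘ P := by
  have hmono : Monotone (T ∘ P.symm) := fun i j hij => by
    simpa using (Prod.Lex.monotone_fst _ _ (h.monotone hij))
  rw [← eq_of_monotone_of_content_eq hmono (blockWord_mono hN S)
    (by rw [content_comp_equiv, hT])]
  simp [Function.comp_assoc]

variable {l : YoungDiagram}

lemma lt_of_row_lt_of_isSemistandardOn {T : l.cells → Fin N} (hT : IsSemistandardOn l.cells T)
    {i i' j : ℕ} (h : (i, j) ∈ l.cells) (h' : (i', j) ∈ l.cells) (hi : i < i') :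
    T ⟨(i, j), h⟩ < T ⟨(i', j), h'⟩ := by
  induction i', hi using Nat.le_induction with
  | base => exact hT.2 i j h h'
  | succ k _ ih =>
    have habove : (k, j) ∈ l.cells := l.up_left_mem k.le_succ le_rfl h'
    exact (ih habove).trans (hT.2 k j habove h')

lemma existsUnique_isStandardization {T : l.cells → Fin N} (hT : IsSemistandardOn l.cells T)
    (hd : #l.cells = d) : ∃! P : l.cells ≃ Fin d, IsStandardization T P := by
  refine existsUnique_strictMono_comp_symm ?_ (by rw [Fintype.card_coe, hd])
  rintro ⟨⟨i, j⟩, h⟩ ⟨⟨i', j'⟩, h'⟩ heq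
  obtain ⟨hT', rfl : j = j'⟩ := Prod.ext_iff.1 (toLex.injective heq)
  obtain hi | rfl | hi := lt_trichotomy i i'
  · exact absurd hT' (lt_of_row_lt_of_isSemistandardOn hT h h' hi).ne
  · rfl
  · exact absurd hT' (lt_of_row_lt_of_isSemistandardOn hT h' h hi).ne'

open scoped Classical in
lemma coeff_content_blockWord_schurPoly (hN : d ≤ N) (hd : #l.cells = d) (S : Finset ℕ) :
    coeff (content (blockWord hN S)) (schurPoly N l) =
      #{P : l.cells ≃ Fin d | IsSemistandardOn l.cells P ∧ descents P ⊆ S} := by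
  rw [coeff_schurPoly, Nat.cast_inj]
  symm
  refine card_bij (fun P _ => blockWord hN S ∘ P) ?_ ?_ ?_ <;>
    simp only [mem_filter, mem_univ, true_and]
  · rintro P ⟨hP, hdes⟩
    rw [← isStandardization_blockWord_comp_iff hN] at hdes
    exact ⟨hdes.isSemistandardOn_iff.1 hP, content_comp_equiv _ _⟩
  · rintro P ⟨hP, hPdes⟩ Q ⟨-, hQdes⟩ hPQ
    rw [← isStandardization_blockWord_comp_iff hN] at hPdes hQdes
    exact (existsUnique_isStandardization (hPdes.isSemistandardOn_iff.1 hP) hd).unique hPdes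
      (hPQ ▸ hQdes)
  · rintro T ⟨hT, hcontent⟩
    obtain ⟨P, hP, -⟩ := existsUnique_isStandardization hT hd
    obtain rfl := hP.eq_blockWord_comp hcontent
    exact ⟨P, ⟨hP.isSemistandardOn_iff.2 hT, (isStandardization_blockWord_comp_iff hN).1 hP⟩, rfl⟩

end Standardization

section Descents

variable {l : YoungDiagram} {d : ℕ} {P : l.cells ≃ Fin d} {t : ℕ → ℕ}

/-- Along a run of descents the column weakly decreases, so a step from column `j` to column
`j + 1` has to pass a non-descent. -/
lemma le_apply_of_notMem_descents (hP : IsSemistandardOn l.cells P) (ht : Monotone t)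
    (ht0 : t 0 = 0) (hbreaks : ∀ k ∈ Ico 1 d, k ∉ descents P → ∃ m, t m = k) (i j : ℕ)
    (h : (i, j) ∈ l.cells) : t j ≤ P ⟨(i, j), h⟩ := by
  induction j with
  | zero => simp [ht0]
  | succ j ih =>
    have hleft : (i, j) ∈ l.cells := l.up_left_mem le_rfl j.le_succ h
    have hle : (P ⟨(i, j), hleft⟩ : ℕ) ≤ P ⟨(i, j + 1), h⟩ := hP.1 i j hleft h
    by_contra! hlt
    have hanti : AntitoneOn (colWord P)
        (Set.Icc (P ⟨(i, j), hleft⟩ : ℕ) (P ⟨(i, j + 1), h⟩)) := by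
      refine antitoneOn_of_add_one_le Set.ordConnected_Icc fun k _ hk hk' => ?_
      by_contra hcol
      obtain ⟨m, hm⟩ := hbreaks (k + 1)
        (mem_Ico.2 ⟨Nat.le_add_left 1 k, hk'.2.trans_lt (P ⟨(i, j + 1), h⟩).2⟩)
        (by simpa [descents] using fun _ => not_le.1 hcol)
      have hjm : t j < t m := by have := ih hleft; have := hk.1; lia
      have hmj : t m < t (j + 1) := by have := hk'.2; lia
      exact (ht.reflect_lt hjm).not_ge (Nat.le_of_lt_succ (ht.reflect_lt hmj))
    have hcol := hanti (Set.left_mem_Icc.2 hle) (Set.right_mem_Icc.2 hle) hle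
    simp only [colWord_apply] at hcol
    lia

lemma le_headSum_transpose_of_notMem_descents (hP : IsSemistandardOn l.cells P) (ht : Monotone t)
    (ht0 : t 0 = 0) (hbreaks : ∀ k ∈ Ico 1 d, k ∉ descents P → ∃ m, t m = k) {m : ℕ}
    (hm : t m ≤ d) : t m ≤ headSum l.transpose m := by
  rw [← card_filter_apply_lt P hm, ← card_filter_col_lt]
  refine card_le_card (monotone_filter_right _ fun c _ hc => ?_)
  by_contra! hcol
  exact ((ht hcol).trans (le_apply_of_notMem_descents hP ht ht0 hbreaks _ _ c.2)).not_gt hc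

open scoped Classical in
/-- The break set of the composition `λ'` of `|λ|`: the partial sums of `λ'` strictly between `0`
and `|λ|`. -/
noncomputable def columnBreaks (l : YoungDiagram) : Finset ℕ :=
  {j ∈ Ico 1 #l.cells | ∃ m, headSum l.transpose m = j}

lemma mem_columnBreaks {j : ℕ} :
    j ∈ columnBreaks l ↔ j ∈ Ico 1 #l.cells ∧ ∃ m, headSum l.transpose m = j := by
  classical
  exact mem_filter

lemma headSum_transpose_colWord_of_notMem_descents
    (hP : ∀ a b : l.cells, P a ≤ P b → a.1.2 ≤ b.1.2) {j : ℕ} (hj : j ∈ Ico 1 d)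
    (hdes : j ∉ descents P) : headSum l.transpose (colWord P j) = j := by
  have hcol : colWord P (j - 1) < colWord P j := by
    simpa [descents, mem_Ico.1 hj] using hdes
  obtain ⟨hpos, hlt⟩ := mem_Ico.1 hj
  obtain ⟨b, hb⟩ := P.surjective ⟨j, hlt⟩
  obtain ⟨a, ha⟩ := P.surjective ⟨j - 1, (Nat.sub_le _ _).trans_lt hlt⟩
  obtain ⟨hbj, haj⟩ := And.intro (Fin.ext_iff.1 hb) (Fin.ext_iff.1 ha)
  simp only at hbj haj
  have hlt_iff (c : l.cells) : c.1.2 < colWord P j ↔ (P c : ℕ) < j := by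
    rw [← haj, ← hbj, colWord_apply, colWord_apply] at hcol
    rw [← hbj, colWord_apply]
    refine ⟨fun hc => ?_, fun hc => ?_⟩
    · by_contra! hle
      exact (hP b c hle).not_gt hc
    · exact (hP c a (Fin.le_def.2 (by lia))).trans_lt hcol
  rw [← card_filter_col_lt]
  simp only [hlt_iff]
  exact card_filter_apply_lt P hlt.le

/-- The witness numbers the cells column by column, from top to bottom in each column. -/
lemma exists_columnBreaks_union_descents_eq (hd : #l.cells = d) :
    ∃ P : l.cells ≃ Fin d,
      IsSemistandardOn l.cells P ∧ columnBreaks l ∪ descents P = Ico 1 d := by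
  obtain ⟨P, hP, -⟩ := existsUnique_strictMono_comp_symm (d := d)
    (key := fun c : l.cells => toLex (c.1.2, c.1.1))
    (toLex.injective.comp (Prod.swap_injective.comp Subtype.val_injective)) (by simpa using hd)
  have hlt (a b : l.cells) : P a < P b ↔ a.1.2 < b.1.2 ∨ a.1.2 = b.1.2 ∧ a.1.1 < b.1.1 := by
    rw [← StrictMono.lt_iff_lt hP]
    simp [Prod.Lex.toLex_lt_toLex]
  refine ⟨P, ⟨fun i j h1 h2 => ((hlt _ _).2 (by simp)).le, fun i j h1 h2 => (hlt _ _).2 (by simp)⟩,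
    Subset.antisymm (union_subset (fun k hk => hd ▸ (mem_columnBreaks.1 hk).1)
      (filter_subset _ _)) fun j hj => ?_⟩
  rw [mem_union, or_iff_not_imp_right, mem_columnBreaks, hd]
  refine fun hdes =>
    ⟨hj, _, headSum_transpose_colWord_of_notMem_descents (fun a b hab => ?_) hj hdes⟩
  have := mt (hlt b a).2 hab.not_gt
  lia

end Descents

section ElementaryPairing

variable {N d : ℕ}

lemma sum_Icc_neg_one_pow_card {α : Type*} [DecidableEq α] (A U : Finset α) :
    ∑ S ∈ Icc A U, (-1 : ℤ) ^ #S = if A = U then (-1) ^ #U else 0 := by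
  by_cases hAU : A ⊆ U
  · have hdisj {T : Finset α} (hT : T ∈ (U \ A).powerset) : Disjoint A T :=
      disjoint_sdiff.mono_right (mem_powerset.1 hT)
    have hinj : Set.InjOn (A ∪ ·) ((U \ A).powerset : Set (Finset α)) :=
      Set.LeftInvOn.injOn (f₁' := (· \ A)) fun T hT => union_sdiff_cancel_left (hdisj hT)
    have hcard : ∀ T ∈ (U \ A).powerset, (-1 : ℤ) ^ #(A ∪ T) = (-1) ^ #A * (-1) ^ #T :=
      fun T hT => by rw [card_union_of_disjoint (hdisj hT), pow_add]
    have hempty : U \ A = ∅ ↔ A = U :=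
      sdiff_eq_empty_iff_subset.trans ⟨hAU.antisymm, fun h => h.superset⟩
    rw [Icc_eq_image_powerset hAU, sum_image hinj, sum_congr rfl hcard, ← mul_sum,
      sum_powerset_neg_one_pow_card]
    simp +contextual only [hempty, mul_ite, mul_one, mul_zero]
  · rw [Icc_eq_empty (by simpa using hAU), sum_empty, if_neg fun h => hAU h.subset]

/-- The functional `f ↦ ∑_{S ⊇ B} (-1)^|S| [x^{α(S)}] f` on polynomials of degree `d`, where `α(S)`
is the composition of `d` with break set `S ⊆ {1, …, d - 1}`. On symmetric polynomials the
coefficient of `x^α` is the pairing with the complete homogeneous function `h_α`, so up to sign this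
is the pairing with the elementary symmetric function `e_{α(B)} = ∑_{S ⊇ B} ± h_{α(S)}`. -/
noncomputable def elementaryPairing (hN : d ≤ N) (B : Finset ℕ) :
    MvPolynomial (Fin N) ℤ →ₗ[ℤ] ℤ :=
  ∑ S ∈ Icc B (Ico 1 d), (-1 : ℤ) ^ #S • lcoeff ℤ (content (blockWord hN S))

lemma elementaryPairing_apply (hN : d ≤ N) (B : Finset ℕ) (f : MvPolynomial (Fin N) ℤ) :
    elementaryPairing hN B f =
      ∑ S ∈ Icc B (Ico 1 d), (-1) ^ #S * coeff (content (blockWord hN S)) f := by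
  simp [elementaryPairing]

open scoped Classical in
lemma elementaryPairing_schurPoly (hN : d ≤ N) {l : YoungDiagram} (hd : #l.cells = d)
    (B : Finset ℕ) :
    elementaryPairing hN B (schurPoly N l) = (-1) ^ #(Ico 1 d) *
      #{P : l.cells ≃ Fin d | IsSemistandardOn l.cells P ∧ B ∪ descents P = Ico 1 d} := by
  have hterm (P : l.cells ≃ Fin d) :
      ∑ S ∈ Icc B (Ico 1 d) with descents P ⊆ S, (-1 : ℤ) ^ #S =
        if B ∪ descents P = Ico 1 d then (-1) ^ #(Ico 1 d) else 0 := by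
    rw [← sum_Icc_neg_one_pow_card]
    congr 1
    ext S
    simp [union_subset_iff, and_right_comm]
  calc elementaryPairing hN B (schurPoly N l)
      = ∑ S ∈ Icc B (Ico 1 d), ∑ P ∈ {P : l.cells ≃ Fin d | IsSemistandardOn l.cells P},
          if descents P ⊆ S then (-1) ^ #S else 0 := by
        simp only [elementaryPairing_apply, coeff_content_blockWord_schurPoly hN hd,
          ← filter_filter, card_filter, Nat.cast_sum, mul_sum, Nat.cast_ite, mul_ite, Nat.cast_one,
          mul_one, Nat.cast_zero, mul_zero]
    _ = ∑ P ∈ {P : l.cells ≃ Fin d | IsSemistandardOn l.cells P},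
          if B ∪ descents P = Ico 1 d then (-1) ^ #(Ico 1 d) else 0 := by
        rw [sum_comm]
        simp only [← sum_filter, hterm]
    _ = _ := by
        rw [← sum_filter, filter_filter, sum_const, nsmul_eq_mul, mul_comm]

lemma elementaryPairing_schurPoly_ne_zero_iff (hN : d ≤ N) {l : YoungDiagram} (hd : #l.cells = d)
    {B : Finset ℕ} :
    elementaryPairing hN B (schurPoly N l) ≠ 0 ↔
      ∃ P : l.cells ≃ Fin d, IsSemistandardOn l.cells P ∧ B ∪ descents P = Ico 1 d := by
  classical
  simp [elementaryPairing_schurPoly hN hd, filter_eq_empty_iff]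

lemma dominatedBy_transpose_of_elementaryPairing_ne_zero (hN : d ≤ N) {nu l : YoungDiagram}
    (hnu : #nu.cells = d) (hl : #l.cells = d)
    (h : elementaryPairing hN (columnBreaks nu) (schurPoly N l) ≠ 0) :
    DominatedBy nu.transpose l.transpose := by
  obtain ⟨P, hP, hbreaks⟩ := (elementaryPairing_schurPoly_ne_zero_iff hN hl).1 h
  refine ⟨by rw [card_cells_transpose, card_cells_transpose, hnu, hl], fun m => ?_⟩
  refine le_headSum_transpose_of_notMem_descents hP (headSum_mono _) (headSum_zero _)
    (fun k hk hdes => ?_) (hnu ▸ headSum_transpose_le_card nu m)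
  have hmem : k ∈ columnBreaks nu := (mem_union.1 (hbreaks ▸ hk)).resolve_right hdes
  exact (mem_columnBreaks.1 hmem).2

end ElementaryPairing

section Plethysm

variable {N D n : ℕ}

lemma blockIndex_image_mul (hn : 0 < n) (S : Finset ℕ) (i : ℕ) :
    blockIndex (S.image (n * ·)) i = blockIndex S (i / n) := by
  induction i with
  | zero => simp [blockIndex]
  | succ i ih =>
    have hmem : i + 1 ∈ S.image (n * ·) ↔ n ∣ i + 1 ∧ (i + 1) / n ∈ S := by
      simp only [mem_image]
      refine ⟨?_, fun ⟨hdvd, hS⟩ => ⟨_, hS, Nat.mul_div_cancel' hdvd⟩⟩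
      rintro ⟨j, hj, hji⟩
      simpa [← hji, hn] using hj
    rw [blockIndex_succ, ih, Nat.succ_div]
    by_cases hdvd : n ∣ i + 1
    · simp [hmem, hdvd, blockIndex_succ, Nat.succ_div]
    · simp [hmem, hdvd]

lemma content_blockWord_image_mul (hn : 0 < n) (hN : D * n ≤ N) (hN' : D ≤ N) (S : Finset ℕ) :
    content (blockWord hN (S.image (n * ·))) = n • content (blockWord hN' S) := by
  have hword : blockWord hN (S.image (n * ·)) ∘ finProdFinEquiv =
      fun p : Fin D × Fin n => blockWord hN' S p.1 := by
    ext p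
    simp [blockWord, blockIndex_image_mul hn, Nat.add_mul_div_left, hn, Nat.div_eq_of_lt p.2.2]
  rw [← content_comp_equiv _ finProdFinEquiv, hword, content_comp_fst, Fintype.card_fin]

lemma sum_content_blockWord_lt {d : ℕ} (hN : d ≤ N) {S : Finset ℕ} {b : ℕ} (hb : b ∈ S)
    (hbd : b ∈ Ico 1 d) :
    ∑ v ∈ {v : Fin N | v.val < blockIndex S b}, content (blockWord hN S) v = b := by
  obtain ⟨hpos, hlt⟩ := mem_Ico.1 hbd
  have hindex (i : ℕ) : blockIndex S i < blockIndex S b ↔ i < b := by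
    refine ⟨(blockIndex_mono S).reflect_lt, fun hi => ?_⟩
    obtain ⟨b, rfl⟩ := Nat.exists_eq_add_of_le' hpos
    rw [blockIndex_succ, if_pos hb]
    exact Nat.lt_succ_of_le (blockIndex_mono S (Nat.le_of_lt_succ hi))
  simp only [sum_content, blockWord, mem_filter, mem_univ, true_and, hindex]
  exact Fin.card_filter_val_lt.trans (min_eq_right hlt.le)

lemma exists_image_mul_eq_of_coeff_expand_ne_zero (hN : D * n ≤ N) {S : Finset ℕ}
    (hS : S ⊆ Ico 1 (D * n)) {f : MvPolynomial (Fin N) ℤ}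
    (hne : coeff (content (blockWord hN S)) (expand n f) ≠ 0) :
    ∃ S' ⊆ Ico 1 D, S'.image (n * ·) = S := by
  have hdvd : ∀ b ∈ S, n ∣ b := fun b hb => by
    rw [← sum_content_blockWord_lt hN hb (hS hb)]
    exact dvd_sum fun v _ => by_contra fun h => hne (coeff_expand_of_not_dvd f h)
  refine subset_image_iff.1 fun b hb => ?_
  obtain ⟨k, rfl⟩ := hdvd b hb
  have hk := mem_Ico.1 (hS hb)
  refine mem_image_of_mem _ (mem_Ico.2 ⟨Nat.pos_of_mul_pos_left hk.1, ?_⟩)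
  exact lt_of_mul_lt_mul_left' (by rw [mul_comm n D]; exact hk.2)

lemma elementaryPairing_image_mul_expand (hn : 0 < n) (hN : D * n ≤ N) (hN' : D ≤ N)
    (B : Finset ℕ) (f : MvPolynomial (Fin N) ℤ) :
    elementaryPairing hN (B.image (n * ·)) (expand n f) = elementaryPairing hN' B f := by
  have hinj : Function.Injective (n * ·) := mul_right_injective₀ hn.ne'
  rw [elementaryPairing_apply, elementaryPairing_apply]
  symm
  refine sum_of_injOn (image (n * ·)) (image_injective hinj).injOn ?_ ?_ ?_
  · intro S hS
    obtain ⟨hBS, hSU⟩ := mem_Icc.1 hS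
    refine mem_Icc.2 ⟨image_subset_image hBS, image_subset_iff.2 fun j hj => ?_⟩
    obtain ⟨hpos, hlt⟩ := mem_Ico.1 (hSU hj)
    exact mem_Ico.2 ⟨Nat.mul_pos hn hpos, mul_comm D n ▸ Nat.mul_lt_mul_of_pos_left hlt hn⟩
  · intro S hS hnot
    obtain ⟨hBS, hSU⟩ := mem_Icc.1 hS
    by_contra hne
    obtain ⟨S', hS', rfl⟩ :=
      exists_image_mul_eq_of_coeff_expand_ne_zero hN hSU (right_ne_zero_of_mul hne)
    exact hnot ⟨S', mem_Icc.2 ⟨(image_subset_image_iff hinj).1 hBS, hS'⟩, rfl⟩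
  · intro S _
    rw [card_image_of_injective _ hinj, content_blockWord_image_mul hn hN hN',
      coeff_expand_smul _ hn.ne']

lemma exists_columns_of_elementaryPairing_expand_ne_zero (hn : 0 < n) (hN : D * n ≤ N)
    {l : YoungDiagram} (hl : #l.cells = D) {B : Finset ℕ}
    (hne : elementaryPairing hN B (expand n (schurPoly N l)) ≠ 0) :
    ∃ P : l.cells ≃ Fin D, IsSemistandardOn l.cells P ∧
      ∀ k ∈ Ico 1 D, k ∉ descents P → n * k ∈ B := by
  have hN' : D ≤ N := (Nat.le_mul_of_pos_right D hn).trans hN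
  obtain ⟨S, hS, hcoeff⟩ := exists_ne_zero_of_sum_ne_zero (elementaryPairing_apply hN B _ ▸ hne)
  obtain ⟨hBS, hSU⟩ := mem_Icc.1 hS
  obtain ⟨S', -, rfl⟩ :=
    exists_image_mul_eq_of_coeff_expand_ne_zero hN hSU (right_ne_zero_of_mul hcoeff)
  obtain ⟨B, -, rfl⟩ := subset_image_iff.1 hBS
  rw [elementaryPairing_image_mul_expand hn hN hN',
    elementaryPairing_schurPoly_ne_zero_iff hN' hl] at hne
  obtain ⟨P, hP, hbreaks⟩ := hne
  refine ⟨P, hP, fun k hk hdes => mem_image_of_mem _ ?_⟩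
  exact (mem_union.1 (hbreaks ▸ hk)).resolve_right hdes

lemma headSum_transpose_le_of_elementaryPairing_expand_ne_zero (hn : 0 < n) (hN : D * n ≤ N)
    {l nu : YoungDiagram} (hl : #l.cells = D) (hnu : #nu.cells = D * n)
    (hne : elementaryPairing hN (columnBreaks nu) (expand n (schurPoly N l)) ≠ 0) (m : ℕ) :
    headSum nu.transpose m ≤ n * headSum l.transpose m := by
  obtain ⟨P, hP, hbreaks⟩ := exists_columns_of_elementaryPairing_expand_ne_zero hn hN hl hne
  rw [← ceilDiv_le_iff_le_mul hn]
  refine le_headSum_transpose_of_notMem_descents (t := fun m => headSum nu.transpose m ⌈/⌉ n) hP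
    ?_ ?_ (fun k hk hdes => ?_) ?_
  · exact (gc_mul_ceilDiv hn).monotone_l.comp (headSum_mono _)
  · simp
  · obtain ⟨-, m, hm⟩ := mem_columnBreaks.1 (hbreaks k hk hdes)
    exact ⟨m, by simp only [hm]; exact smul_ceilDiv hn k⟩
  · rw [ceilDiv_le_iff_le_mul hn, mul_comm, ← hnu]
    exact headSum_transpose_le_card nu m

lemma headSum_transpose_le_of_expand_eq_sum (hn : 0 < n) {lam : YoungDiagram}
    (hN : n * #lam.cells ≤ N) {co : YoungDiagram →₀ ℤ}
    (hrows : ∀ l ∈ co.support, l.colLen 0 ≤ N)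
    (hexp : expand n (schurPoly N lam) = ∑ l ∈ co.support, co l • schurPoly N l)
    {mu : YoungDiagram} (hmu : mu ∈ co.support) (c : ℕ) :
    headSum mu.transpose c ≤ n * headSum lam.transpose c := by
  rw [mul_comm] at hN
  have hcard : ∀ l ∈ co.support, #l.cells = #lam.cells * n := fun l hl => by
    rw [(card_eq_and_headSum_le_of_expand_eq_sum hn.ne' hrows hexp hl).1, mul_comm]
  obtain ⟨nu, hnu, hdom, hne⟩ :=
    exists_rel_apply_sum_ne_zero (InvImage DominatedBy YoungDiagram.transpose) (schurPoly N)
      (fun l => elementaryPairing hN (columnBreaks l)) co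
      (fun l hl => (elementaryPairing_schurPoly_ne_zero_iff hN (hcard l hl)).2
        (exists_columnBreaks_union_descents_eq (hcard l hl)))
      (fun l hl m hm => dominatedBy_transpose_of_elementaryPairing_ne_zero hN (hcard l hl)
        (hcard m hm))
      hmu
  rw [← hexp] at hne
  exact (hdom.2 c).trans
    (headSum_transpose_le_of_elementaryPairing_expand_ne_zero hn hN rfl (hcard nu hnu) hne c)

end Plethysm

end SXP

/-- **Upper bound for the SXP coefficients.**
Let `n ≥ 1` and let `λ, μ` be partitions with `⟨s_μ, p_n ∘ s_λ⟩ ≠ 0`, where the SXP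
coefficient `⟨s_μ, p_n ∘ s_λ⟩` is the coefficient of `s_μ` in the Schur expansion of
`p_n ∘ s_λ = s_λ(x_1^n, …, x_N^n)` in `N ≥ n·|λ|` variables (encoded by a finitely
supported coefficient family `co`, supported on diagrams with at most `N` rows,
which makes it unique).  Define `a_r = ⌊(n|λ| − Σ_{i>r} λ_i)/r⌋` and
`b_c = ⌊(n|λ| − Σ_{j>c} λ'_j)/c⌋`, and let `Ξ¹ = (a_1, a_2, …)`,
`Ξ² = (b_1, b_2, …)'`.  Then `[μ] ⊆ [Ξ¹]` and `[μ] ⊆ [Ξ²]`, i.e. `μ_r ≤ a_r` for all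
`r ≥ 1` and `μ'_c ≤ b_c` for all `c ≥ 1`; that is, `[μ] ⊆ [Ξ¹] ∩ [Ξ²]`. -/
theorem SXP_upper_bound {n : ℕ} (hn : 0 < n) (lam mu : YoungDiagram)
    (N : ℕ) (hN : n * lam.cells.card ≤ N)
    (co : YoungDiagram →₀ ℤ)
    (hrows : ∀ l ∈ co.support, l.colLen 0 ≤ N)
    (hexp : aeval (fun i : Fin N => (X i : MvPolynomial (Fin N) ℤ) ^ n) (schurPoly N lam)
        = ∑ l ∈ co.support, co l • schurPoly N l)
    (hne : co mu ≠ 0) :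
    (∀ r, 1 ≤ r →
      mu.rowLen (r - 1) ≤ (n * lam.cells.card - tailSum lam r) / r) ∧
    (∀ c, 1 ≤ c →
      mu.colLen (c - 1) ≤ (n * lam.cells.card - tailSum lam.transpose c) / c) := by
  have hmu : mu ∈ co.support := Finsupp.mem_support_iff.2 hne
  refine ⟨fun r hr => SXP.rowLen_le_of_headSum_le hn hr ?_, fun c hc => ?_⟩
  · exact (SXP.card_eq_and_headSum_le_of_expand_eq_sum hn.ne' hrows hexp hmu).2 r
  · rw [← mu.rowLen_transpose, ← SXP.card_cells_transpose lam]
    exact SXP.rowLen_le_of_headSum_le hn hc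
      (SXP.headSum_transpose_le_of_expand_eq_sum hn hN hrows hexp hmu c)
end

section
/- Let λ be a partition and r, c nonnegative integers with λ_{r+1} ≤ c (i.e. the point (c,r) is not in the Young diagram [λ]). Then there exists a semistandard Young tableau of shape λ in the signed alphabet {−c < −c+1 < ⋯ < −1 < 1 < 2 < ⋯ < r} (negative letters strictly increasing along rows and weakly increasing down columns, positive letters weakly increasing along rows and strictly increasing down columns); explicitly, for each k < c (columns 0-indexed) the cells of [λ] lying in the k-th column are filled with the letter k − c, and every remaining cell in the i-th row (0-indexed) is filled with the positive letter i+1, and this filling is a valid semistandard signed tableau. -/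
open MvPolynomial Finset

/-- The canonical signed (super) filling for the alphabet `{−c, …, −1, 1, …, r}`:
the cell in row `i`, column `j` (0-indexed) receives the negative letter `j − c`
if `j < c`, and the positive letter `i + 1` otherwise. -/
def canonicalFilling (c : ℕ) (i j : ℕ) : ℤ :=
  if j < c then (j : ℤ) - (c : ℤ) else (i : ℤ) + 1

section CanonicalFilling

variable {r c i i' j j' : ℕ}

theorem canonicalFilling_of_lt (hj : j < c) : canonicalFilling c i j = (j : ℤ) - c :=
  if_pos hj

theorem canonicalFilling_of_le (hj : c ≤ j) : canonicalFilling c i j = (i : ℤ) + 1 :=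
  if_neg hj.not_gt

theorem canonicalFilling_neg_iff : canonicalFilling c i j < 0 ↔ j < c := by
  rcases lt_or_ge j c with hj | hj
  · rw [canonicalFilling_of_lt hj]
    omega
  · rw [canonicalFilling_of_le hj]
    omega

theorem canonicalFilling_pos_iff : 0 < canonicalFilling c i j ↔ c ≤ j := by
  rcases lt_or_ge j c with hj | hj
  · rw [canonicalFilling_of_lt hj]
    omega
  · rw [canonicalFilling_of_le hj]
    omega

theorem canonicalFilling_ne_zero : canonicalFilling c i j ≠ 0 :=
  (lt_or_ge j c).elim (fun hj => (canonicalFilling_neg_iff.mpr hj).ne)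
    fun hj => (canonicalFilling_pos_iff.mpr hj).ne'

theorem neg_le_canonicalFilling : -(c : ℤ) ≤ canonicalFilling c i j := by
  rcases lt_or_ge j c with hj | hj
  · rw [canonicalFilling_of_lt hj]
    omega
  · rw [canonicalFilling_of_le hj]
    omega

theorem canonicalFilling_le_iff :
    canonicalFilling c i j ≤ r ↔ ¬(r, c) ≤ (i, j) := by
  rw [Prod.mk_le_mk]
  rcases lt_or_ge j c with hj | hj
  · rw [canonicalFilling_of_lt hj]
    omega
  · rw [canonicalFilling_of_le hj]
    omega

theorem canonicalFilling_lt_of_column_lt (hj : j < j') (hneg : canonicalFilling c i j < 0) :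
    canonicalFilling c i j < canonicalFilling c i j' := by
  rcases lt_or_ge j' c with hj' | hj'
  · rw [canonicalFilling_of_lt (hj.trans hj'), canonicalFilling_of_lt hj']
    omega
  · exact hneg.trans (canonicalFilling_pos_iff.mpr hj')

theorem canonicalFilling_lt_of_row_lt (hi : i < i') (hpos : 0 < canonicalFilling c i' j) :
    canonicalFilling c i j < canonicalFilling c i' j := by
  have hj : c ≤ j := canonicalFilling_pos_iff.mp hpos
  rw [canonicalFilling_of_le hj, canonicalFilling_of_le hj]
  omega

theorem canonicalFilling_row_monotone : Monotone (canonicalFilling c i) := by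
  intro j j' hjj'
  rcases lt_or_ge j c with hj | hj
  · rcases hjj'.eq_or_lt with rfl | hlt
    · rfl
    · exact (canonicalFilling_lt_of_column_lt hlt (canonicalFilling_neg_iff.mpr hj)).le
  · rw [canonicalFilling_of_le hj, canonicalFilling_of_le (hj.trans hjj')]

theorem canonicalFilling_column_monotone : Monotone (canonicalFilling c · j) := by
  intro i i' hii'
  dsimp only
  rcases lt_or_ge j c with hj | hj
  · rw [canonicalFilling_of_lt hj, canonicalFilling_of_lt hj]
  · rcases hii'.eq_or_lt with rfl | hlt
    · rfl
    · exact (canonicalFilling_lt_of_row_lt hlt (canonicalFilling_pos_iff.mpr hj)).le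

end CanonicalFilling

theorem canonicalFilling_isSemistandardSigned_general {s : Set (ℕ × ℕ)} {r c : ℕ}
    (h : (r, c) ∉ lowerClosure s) :
    (∀ i j, (i, j) ∈ s →
        canonicalFilling c i j ≠ 0 ∧
        -(c : ℤ) ≤ canonicalFilling c i j ∧ canonicalFilling c i j ≤ (r : ℤ)) ∧
    (∀ i, Monotone (canonicalFilling c i)) ∧
    (∀ j, Monotone (canonicalFilling c · j)) ∧
    (∀ i j j', j < j' → canonicalFilling c i j < 0 →
        canonicalFilling c i j < canonicalFilling c i j') ∧
    (∀ i i' j, i < i' → 0 < canonicalFilling c i' j →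
        canonicalFilling c i j < canonicalFilling c i' j) := by
  refine ⟨fun i j hij => ⟨canonicalFilling_ne_zero, neg_le_canonicalFilling, ?_⟩,
    fun _ => canonicalFilling_row_monotone, fun _ => canonicalFilling_column_monotone,
    fun _ _ _ => canonicalFilling_lt_of_column_lt, fun _ _ _ => canonicalFilling_lt_of_row_lt⟩
  exact canonicalFilling_le_iff.mpr fun hle => h (mem_lowerClosure.mpr ⟨(i, j), hij, hle⟩)

/-- **The canonical semistandard signed tableau.**
Let `λ` be a partition and `r, c ≥ 0` with `λ_{r+1} ≤ c`, i.e. the point `(c, r)`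
(column `c`, row `r`, 0-indexed) is not in the Young diagram `[λ]`.  Then the
canonical filling — for `k < c` the `k`-th column of `[λ]` is filled with the
negative letter `k − c`, and every remaining cell in the `i`-th row is filled with
the positive letter `i + 1` — is a valid semistandard signed tableau of shape `λ`
in the alphabet `{−c < ⋯ < −1 < 1 < ⋯ < r}`: its entries are nonzero letters in
`[−c, r]`, weakly increasing along rows and down columns, with negative letters
strictly increasing along rows and positive letters strictly increasing down
columns.  In particular such a tableau exists. -/
theorem canonicalFilling_isSemistandardSigned (lam : YoungDiagram) (r c : ℕ)
    (h : (r, c) ∉ lam) :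
    (∀ i j, (i, j) ∈ lam →
        canonicalFilling c i j ≠ 0 ∧
        -(c : ℤ) ≤ canonicalFilling c i j ∧ canonicalFilling c i j ≤ (r : ℤ)) ∧
    (∀ i j, (i, j) ∈ lam → (i, j + 1) ∈ lam →
        canonicalFilling c i j ≤ canonicalFilling c i (j + 1)) ∧
    (∀ i j, (i, j) ∈ lam → (i + 1, j) ∈ lam →
        canonicalFilling c i j ≤ canonicalFilling c (i + 1) j) ∧
    (∀ i j, (i, j) ∈ lam → (i, j + 1) ∈ lam → canonicalFilling c i j < 0 →
        canonicalFilling c i j < canonicalFilling c i (j + 1)) ∧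
    (∀ i j, (i, j) ∈ lam → (i + 1, j) ∈ lam → 0 < canonicalFilling c (i + 1) j →
        canonicalFilling c i j < canonicalFilling c (i + 1) j) := by
  have hlam : (r, c) ∉ lowerClosure (lam : Set (ℕ × ℕ)) := fun ⟨_, hp, hle⟩ =>
    h (lam.isLowerSet hle hp)
  obtain ⟨hletters, hrow, hcol, hneg, hpos⟩ := canonicalFilling_isSemistandardSigned_general hlam
  exact ⟨hletters, fun i j _ _ => hrow i j.le_succ, fun i j _ _ => hcol j i.le_succ,
    fun i j _ _ => hneg i j _ j.lt_succ_self, fun i j _ _ => hpos i _ j i.lt_succ_self⟩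
end
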